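/- If q ≥ ns + Σ_{t=1}^{s} C(s,t)·s·t·(t−1)/2, then there exist ns pairwise distinct elements λ_0, …, λ_{ns−1} ∈ F_q satisfying the local constraints, i.e., det(A_{a,B}) ≠ 0 for every a ∈ {0,…,n/s−1} and every nonempty subset B ⊆ {0,…,s−1}. -/

import Mathlib

open Matrix

/-- The `u`-th digit of `i` in base `s`. -/
def digit (s i u : ℕ) : ℕ := i / s ^ u % s

open scoped Classical in
/-- The `z`-th entry of the `(i,j)` block (a length-`t` column vector, `0 ≤ z < t`) of the
block matrix `A_{a,b}^{(t)}`; the group size is `g` (`g = s` for the first construction and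
`g = s + 1` for the second), so the relevant `λ`-index is `a·s·g + b·s + j_a`. -/
noncomputable def Aent {F : Type*} [Field F] (lam : ℕ → F) (s g a b i j z : ℕ) : F :=
  if i = j then lam (a * s * g + b * s + digit s j a) ^ z
  else if digit s i a = b ∧ digit s j a ≠ b ∧ (∀ u, u ≠ a → digit s i u = digit s j u) then
    -(lam (a * s * g + b * s + digit s j a) ^ z)
  else 0

/-- `A_{a,b}^{(t)}` as an `ℓt × ℓ` matrix; row `ρ` encodes block row `ρ / t` and
inner row `ρ % t`. -/
noncomputable def Amat {F : Type*} [Field F] (lam : ℕ → F) (s g ℓ a b t : ℕ) :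
    Matrix (Fin (ℓ * t)) (Fin ℓ) F :=
  Matrix.of fun ρ j => Aent lam s g a b ((ρ : ℕ) / t) (j : ℕ) ((ρ : ℕ) % t)

/-- The `m`-th smallest element of the finite set `B ⊆ ℕ` (junk value `0` if `m ≥ |B|`). -/
def enum (B : Finset ℕ) (m : ℕ) : ℕ := (B.sort (· ≤ ·)).getD m 0

/-- `A_{a,B}^{(t)} = [A_{a,b₁}^{(t)} | ⋯ | A_{a,b_v}^{(t)}]` as an `ℓt × ℓ|B|` matrix:
row `ρ` encodes block row `ρ / t` and inner row `ρ % t`; column `κ` selects the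
`κ / ℓ`-th member of `B` and inner column `κ % ℓ`. -/
noncomputable def AmatB {F : Type*} [Field F] (lam : ℕ → F) (s g ℓ a t : ℕ) (B : Finset ℕ) :
    Matrix (Fin (ℓ * t)) (Fin (ℓ * B.card)) F :=
  Matrix.of fun ρ κ =>
    Aent lam s g a (enum B ((κ : ℕ) / ℓ)) ((ρ : ℕ) / t) ((κ : ℕ) % ℓ) ((ρ : ℕ) % t)

/-- The local (in-group) constraints: every square matrix `A_{a,B}` (for a group index
`a < groups` and a nonempty `B ⊆ {0, …, g-1}`) is invertible. -/
def LocalConstraints {F : Type*} [Field F] (lam : ℕ → F) (s g ℓ groups : ℕ) : Prop :=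
  ∀ a < groups, ∀ B ⊆ Finset.range g, B.Nonempty → (AmatB lam s g ℓ a B.card B).det ≠ 0

/-- The small kernel matrix for group `a` and the subset `B`. -/
noncomputable def Kmat {F : Type*} [Field F] (lam : ℕ → F) (s a : ℕ) (B : Finset ℕ) :
    Matrix (Fin s × Fin B.card) (Fin s × Fin B.card) F :=
  Matrix.of fun ρ κ =>
    if ρ.1 = κ.1 then lam (a * s * s + enum B κ.2 * s + κ.1) ^ (ρ.2 : ℕ)
    else if (ρ.1 : ℕ) = enum B κ.2 then
      -(lam (a * s * s + enum B κ.2 * s + κ.1) ^ (ρ.2 : ℕ))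
    else 0

theorem enum_eq (B : Finset ℕ) (m : ℕ) (hm : m < (B.sort (· ≤ ·)).length) :
    enum B m = (B.sort (· ≤ ·))[m] := by
  unfold enum
  exact List.getD_eq_getElem _ _ hm

theorem enum_mem (B : Finset ℕ) (m : Fin B.card) : enum B m ∈ B := by
  have hm : (m : ℕ) < (B.sort (· ≤ ·)).length := by simp
  rw [enum_eq B m hm]
  have := List.getElem_mem hm
  simpa only [Finset.mem_sort] using this

theorem enum_inj (B : Finset ℕ) (m m' : Fin B.card) (h : enum B m = enum B m') : m = m' := by
  have hm : (m : ℕ) < (B.sort (· ≤ ·)).length := by simp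
  have hm' : (m' : ℕ) < (B.sort (· ≤ ·)).length := by simp
  rw [enum_eq B m hm, enum_eq B m' hm'] at h
  have nd : (B.sort (· ≤ ·)).Nodup := Finset.sort_nodup _ _
  exact Fin.ext ((nd.getElem_inj_iff).1 h)

theorem Kmat_init {F : Type*} [Field F] (lam mu : ℕ → F) (s a : ℕ) (B : Finset ℕ)
    (hB : B ⊆ Finset.range s)
    (hmu : ∀ b < s, ∀ b' < s, mu b = mu b' → b = b')
    (hlam : ∀ b < s, ∀ j < s, lam (a * s * s + b * s + j) = mu b) :
    (Kmat lam s a B).det ≠ 0 := by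
  intro h0
  obtain ⟨y, hy0, hy⟩ := Matrix.exists_mulVec_eq_zero_iff.2 h0
  have hlt : ∀ m : Fin B.card, enum B m < s := fun m => Finset.mem_range.1 (hB (enum_mem B m))
  have key : ∀ (i : Fin s) (m : Fin B.card),
      (∑ j : Fin s, if i = j then y (j, m) else if (i : ℕ) = enum B m then - y (j, m) else 0)
        = 0 := by
    intro i
    have := Matrix.eq_zero_of_forall_pow_sum_mul_pow_eq_zero
      (f := fun m : Fin B.card => mu (enum B m))
      (v := fun m : Fin B.card =>
        (∑ j : Fin s, if i = j then y (j, m) else if (i : ℕ) = enum B m then - y (j, m) else 0))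
      (fun m m' h => enum_inj B m m' (hmu _ (hlt m) _ (hlt m') h)) ?_
    · intro m; exact congrFun this m
    · intro z
      have := congrFun hy (i, z)
      simp only [Matrix.mulVec, dotProduct, Fintype.sum_prod_type, Pi.zero_apply] at this
      rw [Finset.sum_comm] at this
      refine Eq.trans ?_ this
      refine Finset.sum_congr rfl fun m _ => ?_
      rw [Finset.sum_mul]
      refine Finset.sum_congr rfl fun j _ => ?_
      simp only [Kmat, Matrix.of_apply, hlam _ (hlt m) _ j.2]
      split_ifs <;> ring
  have h1 : ∀ (i : Fin s) (m : Fin B.card), (i : ℕ) ≠ enum B m → y (i, m) = 0 := by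
    intro i m him
    have := key i m
    simpa [him] using this
  apply hy0
  ext ⟨i, m⟩
  by_cases him : (i : ℕ) = enum B m
  · have := key i m
    rw [Finset.sum_eq_single i] at this
    · simpa using this
    · intro j _ hji
      have hj : (j : ℕ) ≠ enum B m := by
        intro h; exact hji (Fin.ext (h.trans him.symm))
      simp [h1 j m hj]
    · simp
  · exact h1 i m him

theorem Kmat_poly {F : Type*} [Field F] (lam : ℕ → F) (s a N : ℕ) (B : Finset ℕ)
    (hB : B ⊆ Finset.range s) :
    ∃ p : Polynomial F, p.natDegree ≤ B.card - 1 ∧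
      ∀ x, (Kmat (Function.update lam N x) s a B).det = p.eval x := by
  have hlt : ∀ m : Fin B.card, enum B m < s := fun m => Finset.mem_range.1 (hB (enum_mem B m))
  by_cases h : ∃ κ : Fin s × Fin B.card, a * s * s + enum B κ.2 * s + κ.1 = N
  · obtain ⟨κ, hκ⟩ := h
    have huniq : ∀ κ' : Fin s × Fin B.card, a * s * s + enum B κ'.2 * s + κ'.1 = N → κ' = κ := by
      intro κ' hκ'
      have h2 : enum B κ'.2 * s + (κ'.1 : ℕ) = enum B κ.2 * s + (κ.1 : ℕ) := by omega
      have hs : 0 < s := κ.1.pos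
      have e1 : (κ'.1 : ℕ) = κ.1 := by
        have := congrArg (· % s) h2
        simpa [Nat.mod_eq_of_lt κ.1.2, Nat.mod_eq_of_lt κ'.1.2, Nat.add_mod] using this
      have e2 : enum B κ'.2 = enum B κ.2 := by
        rw [e1] at h2
        exact Nat.eq_of_mul_eq_mul_right hs (by omega)
      exact Prod.ext (Fin.ext e1) (enum_inj B _ _ e2)
    let c : Fin s × Fin B.card → F := fun ρ =>
      if ρ.1 = κ.1 then 1 else if (ρ.1 : ℕ) = enum B κ.2 then -1 else 0
    refine ⟨∑ ρ : Fin s × Fin B.card, Polynomial.C ((Kmat lam s a B).adjugate κ ρ * c ρ) *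
      Polynomial.X ^ (ρ.2 : ℕ), ?_, ?_⟩
    · refine Polynomial.natDegree_sum_le_of_forall_le _ _ fun ρ _ => ?_
      refine (Polynomial.natDegree_C_mul_X_pow_le _ _).trans ?_
      have := ρ.2.2
      omega
    · intro x
      have hM : Kmat (Function.update lam N x) s a B =
          (Kmat lam s a B).updateCol κ (fun ρ => c ρ * x ^ (ρ.2 : ℕ)) := by
        ext ρ κ'
        by_cases hk : κ' = κ
        · subst hk
          simp only [Kmat, Matrix.of_apply, Matrix.updateCol_self, hκ, Function.update_self, c]
          split_ifs <;> ring
        · have : a * s * s + enum B κ'.2 * s + κ'.1 ≠ N := fun h => hk (huniq _ h)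
          simp [Kmat, Matrix.updateCol_ne hk, Function.update_of_ne this]
      rw [hM, ← Matrix.cramer_apply, Matrix.cramer_eq_adjugate_mulVec, Polynomial.eval_finsetSum]
      simp [Matrix.mulVec, dotProduct, mul_assoc]
  · push Not at h
    refine ⟨Polynomial.C (Kmat lam s a B).det, by simp, fun x => ?_⟩
    have : Kmat (Function.update lam N x) s a B = Kmat lam s a B := by
      ext ρ κ
      simp [Kmat, Function.update_of_ne (h κ)]
    simp [this]

theorem Kmat_unchanged {F : Type*} [Field F] (lam : ℕ → F) (s a N : ℕ) (B : Finset ℕ)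
    (hB : B ⊆ Finset.range s) (ha : a ≠ N / (s * s)) (x : F) :
    Kmat (Function.update lam N x) s a B = Kmat lam s a B := by
  ext ρ κ
  have hb : enum B κ.2 < s := Finset.mem_range.1 (hB (enum_mem B κ.2))
  have hj := κ.1.2
  have : a * s * s + enum B κ.2 * s + κ.1 ≠ N := by
    rintro rfl
    apply ha
    symm
    apply Nat.div_eq_of_lt_le
    · nlinarith
    · nlinarith
  simp [Kmat, Function.update_of_ne this]

theorem greedy {F : Type*} [Field F] [Fintype F] (s M : ℕ) (hs : 1 ≤ s)
    (hM : s ≤ M)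
    (hb : M + ∑ B ∈ (Finset.range s).powerset, (B.card - 1) ≤ Fintype.card F) :
    ∀ N ≤ M, ∃ lam : ℕ → F, (∀ i < N, ∀ j < N, lam i = lam j → i = j) ∧
      ∀ a, ∀ B ⊆ Finset.range s, (Kmat lam s a B).det ≠ 0 := by
  classical
  intro N
  induction N with
  | zero =>
    intro _
    have hsF : Fintype.card (Fin s) ≤ Fintype.card F := by simp; omega
    obtain ⟨e⟩ := Function.Embedding.nonempty_of_card_le hsF
    let mu : ℕ → F := fun b => if h : b < s then e ⟨b, h⟩ else 0
    refine ⟨fun m => mu (m / s % s), by simp, fun a B hB => ?_⟩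
    refine Kmat_init _ mu s a B hB ?_ ?_
    · intro b hb b' hb' h
      simpa [mu, hb, hb'] using h
    · intro b hb j hj
      have h1 : (a * s * s + b * s + j) / s = a * s + b := by
        rw [← Nat.add_mul, Nat.mul_comm, Nat.mul_add_div (by omega), Nat.div_eq_of_lt hj]
        omega
      simp only [h1]
      congr 1
      simp [Nat.mod_eq_of_lt hb]
  | succ N ih =>
    intro hN
    obtain ⟨lam, hinj, hdet⟩ := ih (by omega)
    have hp : ∀ B : Finset ℕ, ∃ p : Polynomial F, B ⊆ Finset.range s →
        p.natDegree ≤ B.card - 1 ∧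
        ∀ x, (Kmat (Function.update lam N x) s (N / (s * s)) B).det = p.eval x := by
      intro B
      by_cases hB : B ⊆ Finset.range s
      · obtain ⟨p, hp⟩ := Kmat_poly lam s (N / (s * s)) N B hB
        exact ⟨p, fun _ => hp⟩
      · exact ⟨0, fun h => absurd h hB⟩
    choose p hp using hp
    let bad : Finset F := (Finset.range N).image lam ∪
      (Finset.range s).powerset.biUnion fun B => (p B).roots.toFinset
    have hbad : bad.card < Fintype.card F := by
      have h1 : bad.card ≤ N + ∑ B ∈ (Finset.range s).powerset, (B.card - 1) := by
        refine (Finset.card_union_le _ _).trans (Nat.add_le_add ?_ ?_)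
        · exact Finset.card_image_le.trans (by simp)
        · refine Finset.card_biUnion_le.trans (Finset.sum_le_sum fun B hB => ?_)
          exact (Multiset.toFinset_card_le _).trans
            ((Polynomial.card_roots' _).trans (hp B (Finset.mem_powerset.1 hB)).1)
      omega
    obtain ⟨x, hx⟩ : ∃ x, x ∉ bad := by
      by_contra! hall
      have : bad = Finset.univ := Finset.eq_univ_iff_forall.2 hall
      rw [this, Finset.card_univ] at hbad
      exact lt_irrefl _ hbad
    simp only [bad, Finset.mem_union, Finset.mem_image, Finset.mem_range, Finset.mem_biUnion,
      Finset.mem_powerset, Multiset.mem_toFinset, not_or, not_exists, not_and] at hx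
    obtain ⟨hx1, hx2⟩ := hx
    refine ⟨Function.update lam N x, ?_, ?_⟩
    · intro i hi j hj h
      by_cases hiN : i = N <;> by_cases hjN : j = N
      · omega
      · subst hiN
        rw [Function.update_self, Function.update_of_ne hjN] at h
        exact absurd h.symm (hx1 j (by omega))
      · subst hjN
        rw [Function.update_self, Function.update_of_ne hiN] at h
        exact absurd h (hx1 i (by omega))
      · rw [Function.update_of_ne hiN, Function.update_of_ne hjN] at h
        exact hinj i (by omega) j (by omega) h
    · intro a B hB
      by_cases ha : a = N / (s * s)
      · subst ha
        have h3 := (hp B hB).2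
        rw [h3 x]
        intro h0
        refine hx2 B hB ((Polynomial.mem_roots ?_).2 h0)
        intro hp0
        have := h3 (lam N)
        rw [Function.update_eq_self, hp0] at this
        exact hdet _ B hB (by simpa using this)
      · rw [Kmat_unchanged lam s a N B hB ha]
        exact hdet a B hB

theorem digit_eq (s N u : ℕ) (f : Fin N → Fin s) (hu : u < N) :
    digit s (finFunctionFinEquiv f : ℕ) u = f ⟨u, hu⟩ := by
  have := congrArg Fin.val (congrFun (finFunctionFinEquiv.symm_apply_apply f) ⟨u, hu⟩)
  rw [← this]
  rfl

theorem digit_big (s N u : ℕ) (hs : 0 < s) (f : Fin N → Fin s) (hu : N ≤ u) :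
    digit s (finFunctionFinEquiv f : ℕ) u = 0 := by
  have h1 : (finFunctionFinEquiv f : ℕ) < s ^ u :=
    lt_of_lt_of_le (finFunctionFinEquiv f).2 (Nat.pow_le_pow_right hs hu)
  unfold digit
  rw [Nat.div_eq_of_lt h1, Nat.zero_mod]

theorem Aent_update {F : Type*} [Field F] (lam : ℕ → F) (s N b z : ℕ) (a : Fin N)
    (hs : 0 < s) (f g : Fin N → Fin s) (i : Fin s) :
    Aent lam s s a b (finFunctionFinEquiv (Function.update f a i) : ℕ)
      (finFunctionFinEquiv g : ℕ) z =
      if g = Function.update f a (g a) then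
        (if i = g a then lam (a * s * s + b * s + g a) ^ z
          else if (i : ℕ) = b then -(lam (a * s * s + b * s + g a) ^ z) else 0)
      else 0 := by
  have e1 : ((finFunctionFinEquiv (Function.update f a i) : ℕ) = (finFunctionFinEquiv g : ℕ)) ↔
      Function.update f a i = g := by
    rw [← Fin.ext_iff]; exact finFunctionFinEquiv.injective.eq_iff
  have e2 : (∀ u, u ≠ (a : ℕ) → digit s (finFunctionFinEquiv (Function.update f a i) : ℕ) u =
      digit s (finFunctionFinEquiv g : ℕ) u) ↔ g = Function.update f a (g a) := by
    constructor
    · intro h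
      ext u
      by_cases hu : u = a
      · subst hu; simp
      · have := h u (fun h => hu (Fin.ext h))
        rw [digit_eq _ _ _ _ u.2, digit_eq _ _ _ _ u.2] at this
        simp only [Fin.eta, Function.update_of_ne hu] at this ⊢
        exact this.symm
    · intro h u hu
      by_cases huN : u < N
      · rw [digit_eq _ _ _ _ huN, digit_eq _ _ _ _ huN]
        have hne : (⟨u, huN⟩ : Fin N) ≠ a := fun h => hu (congrArg Fin.val h)
        rw [h]
        simp [Function.update_of_ne hne]
      · rw [digit_big _ _ _ hs _ (by omega), digit_big _ _ _ hs _ (by omega)]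
  have e3 : Function.update f a i = g ↔ g = Function.update f a (g a) ∧ i = g a := by
    constructor
    · rintro rfl; simp
    · rintro ⟨h1, h2⟩; rw [h2]; exact h1.symm
  unfold Aent
  rw [e2, digit_eq _ _ _ _ a.2, digit_eq _ _ _ _ a.2]
  simp only [e1, e3, Fin.eta, Function.update_self]
  by_cases h1 : g = Function.update f a (g a)
  · by_cases h2 : i = g a
    · rw [if_pos ⟨h1, h2⟩, if_pos h1, if_pos h2]
    · rw [if_neg (fun h => h2 h.2), if_pos h1, if_neg h2]
      by_cases h3 : (i : ℕ) = b
      · rw [if_pos h3, if_pos]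
        exact ⟨h3, fun h => h2 (Fin.ext (h3.trans h.symm)), h1⟩
      · rw [if_neg h3, if_neg (fun h => h3 h.1)]
  · rw [if_neg (fun h => h1 h.1), if_neg h1, if_neg (fun h => h1 h.2.2)]

theorem det_AmatB {F : Type*} [Field F] (lam : ℕ → F) (s N : ℕ) (a : Fin N) (B : Finset ℕ)
    (hs : 0 < s) (hK : (Kmat lam s a B).det ≠ 0) :
    (AmatB lam s s (s ^ N) a B.card B).det ≠ 0 := by
  intro h0
  obtain ⟨x, hx0, hx⟩ := Matrix.exists_mulVec_eq_zero_iff.2 h0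
  let E : Fin B.card × (Fin N → Fin s) ≃ Fin (s ^ N * B.card) :=
    ((Equiv.refl _).prodCongr finFunctionFinEquiv).trans
      (finProdFinEquiv.trans (finCongr (Nat.mul_comm _ _)))
  have hpos : 0 < s ^ N := Nat.pow_pos hs
  have hE : ∀ m f, (E (m, f) : ℕ) = (finFunctionFinEquiv f : ℕ) + s ^ N * m := fun m f => rfl
  have hEd : ∀ m f, (E (m, f) : ℕ) / s ^ N = m := by
    intro m f
    rw [hE, Nat.add_mul_div_left _ _ hpos, Nat.div_eq_of_lt (finFunctionFinEquiv f).2]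
    simp
  have hEm : ∀ m f, (E (m, f) : ℕ) % s ^ N = (finFunctionFinEquiv f : ℕ) := by
    intro m f
    rw [hE, Nat.add_mul_mod_self_left, Nat.mod_eq_of_lt (finFunctionFinEquiv f).2]
  have main : ∀ f : Fin N → Fin s,
      (fun κ : Fin s × Fin B.card => x (E (κ.2, Function.update f a κ.1))) = 0 := by
    intro f
    by_contra hne
    apply hK
    refine Matrix.exists_mulVec_eq_zero_iff.1 ⟨_, hne, ?_⟩
    ext ⟨i, z⟩
    have hz : 0 < B.card := z.pos
    let ρ : Fin (s ^ N * B.card) :=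
      finProdFinEquiv (finFunctionFinEquiv (Function.update f a i), z)
    have hρ : (ρ : ℕ) = (z : ℕ) + B.card * (finFunctionFinEquiv (Function.update f a i) : ℕ) := rfl
    have hρd : (ρ : ℕ) / B.card = (finFunctionFinEquiv (Function.update f a i) : ℕ) := by
      rw [hρ, Nat.add_mul_div_left _ _ hz, Nat.div_eq_of_lt z.2]; simp
    have hρm : (ρ : ℕ) % B.card = z := by
      rw [hρ, Nat.add_mul_mod_self_left, Nat.mod_eq_of_lt z.2]
    have := congrFun hx ρ
    simp only [Matrix.mulVec, dotProduct, Pi.zero_apply, AmatB, Matrix.of_apply, hρd, hρm] at this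
    rw [← E.sum_comp, Fintype.sum_prod_type] at this
    simp only [Matrix.mulVec, dotProduct, Pi.zero_apply]
    rw [Fintype.sum_prod_type, Finset.sum_comm, ← this]
    refine Finset.sum_congr rfl fun m _ => ?_
    refine Fintype.sum_of_injective (fun j : Fin s => Function.update f a j)
      (Function.update_injective f a) _ _ ?_ ?_
    · intro g hg
      rw [hEd, hEm, Aent_update lam s N _ _ a hs, if_neg, zero_mul]
      intro h
      exact hg ⟨g a, h.symm⟩
    · intro j
      rw [hEd, hEm, Aent_update lam s N _ _ a hs, if_pos (by simp)]
      simp [Kmat]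
  apply hx0
  ext κ
  obtain ⟨⟨m, f⟩, rfl⟩ := E.surjective κ
  have := congrFun (main f) (f a, m)
  simpa using this

theorem sum_bound (s : ℕ) (hs : 2 ≤ s) :
    ∑ B ∈ (Finset.range s).powerset, (B.card - 1) ≤
      ∑ t ∈ Finset.Icc 1 s, s.choose t * (s * t * (t - 1) / 2) := by
  rw [Finset.sum_powerset_apply_card (fun t => t - 1), Finset.card_range,
    Finset.sum_range_succ', Finset.range_eq_Ico, Finset.sum_Ico_add'
      (fun t => s.choose t • (t - 1)) 0 s 1]
  simp only [Nat.zero_sub, smul_eq_mul, mul_zero, add_zero, zero_add]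
  have : Finset.Ico 1 (s + 1) = Finset.Icc 1 s := by ext; simp
  rw [this]
  refine Finset.sum_le_sum fun t ht => Nat.mul_le_mul_left _ ?_
  have ht1 := (Finset.mem_Icc.1 ht).1
  rw [Nat.le_div_iff_mul_le (by norm_num), Nat.mul_comm]
  exact Nat.mul_le_mul_right _ (by nlinarith)

/-- Lemma 1 of the paper: if
`q ≥ ns + Σ_{t=1}^{s} C(s,t)·s·t·(t−1)/2`, then there exist `ns` pairwise distinct
elements `λ_0, …, λ_{ns−1}` of `F_q` satisfying the local constraints
`det(A_{a,B}) ≠ 0` for all `a ∈ [n/s]` and all nonempty `B ⊆ [s]`. -/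
theorem statement0 (F : Type*) [Field F] [Fintype F] (q n k d s ℓ : ℕ)
    (hq : Fintype.card F = q)
    (hk : 1 ≤ k) (hkn : k < n) (hd₁ : k + 1 ≤ d) (hd₂ : d ≤ n - 1)
    (hs : s = d - k + 1) (hdiv : s ∣ n) (hℓ : ℓ = s ^ (n / s))
    (hbound : n * s + ∑ t ∈ Finset.Icc 1 s, s.choose t * (s * t * (t - 1) / 2) ≤ q) :
    ∃ lam : ℕ → F,
      (∀ i < n * s, ∀ j < n * s, lam i = lam j → i = j) ∧
      LocalConstraints lam s s ℓ (n / s) := by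
  have hs2 : 2 ≤ s := by omega
  have hsn : s ≤ n * s := Nat.le_mul_of_pos_left _ (by omega)
  obtain ⟨lam, h1, h2⟩ := greedy (F := F) s (n * s) (by omega) hsn
    (by have := sum_bound s hs2; omega) (n * s) le_rfl
  refine ⟨lam, h1, ?_⟩
  intro a ha B hB _
  subst hℓ
  exact det_AmatB lam s (n / s) ⟨a, ha⟩ B (by omega) (h2 a B hB)
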